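/- Let s > 1, p ∈ [1,∞], let ω : ℝ^{2d} → (0,∞) be measurable and v-moderate with constant C₁ (ω(z+w) ≤ C₁·v(z)·ω(w) for all z, w ∈ ℝ^{2d}), where v : ℝ^{2d} → (0,∞) is even, submultiplicative and satisfies v(z) ≤ C₀·exp(k₀·|z|^{1/s}). Let φ, φ₁ be Schwartz functions on ℝ^d and let F ∈ L¹(ℝ^{2d}) with ‖F·ω‖_{L^p(ℝ^{2d})} < ∞. Then ‖V_{φ₁}(V*_φ F)·ω‖_{L^p(ℝ^{2d})} ≤ (2π)^{−d/2}·C₁·‖ |V_{φ₁}φ|·v ‖_{L¹(ℝ^{2d})}·‖F·ω‖_{L^p(ℝ^{2d})}. -/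

import Mathlib

open MeasureTheory Complex Set
open scoped ENNReal RealInnerProductSpace NNReal

noncomputable section

namespace Paper

variable {d : ℕ}

/-- The Fourier transform, normalized by `(2π)^{-d/2}`. -/
def FT (f : EuclideanSpace ℝ (Fin d) → ℂ) (ξ : EuclideanSpace ℝ (Fin d)) : ℂ :=
  ((2 * Real.pi) ^ (-(d : ℝ) / 2) : ℝ) *
    ∫ x, f x * Complex.exp (-(⟪x, ξ⟫ : ℝ) * Complex.I)

/-- The short-time Fourier transform `V_φ f (x, ξ)`. -/
def STFT (φ f : EuclideanSpace ℝ (Fin d) → ℂ) (x ξ : EuclideanSpace ℝ (Fin d)) : ℂ :=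
  ((2 * Real.pi) ^ (-(d : ℝ) / 2) : ℝ) *
    ∫ y, f y * (starRingEnd ℂ) (φ (y - x)) * Complex.exp (-(⟪ξ, y⟫ : ℝ) * Complex.I)

/-- A cone in `ℝ^d ∖ {0}`. -/
def IsCone (Γ : Set (EuclideanSpace ℝ (Fin d))) : Prop :=
  (0 : EuclideanSpace ℝ (Fin d)) ∉ Γ ∧ ∀ ξ ∈ Γ, ∀ t : ℝ, 0 < t → t • ξ ∈ Γ

/-- An `s`-cutoff: smooth, compactly supported, with Fourier transform decaying faster
than every `exp (-N |ξ|^{1/s})`. -/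
def IsSCutoff (s : ℝ) (φ : EuclideanSpace ℝ (Fin d) → ℂ) : Prop :=
  ContDiff ℝ (⊤ : ℕ∞) φ ∧ HasCompactSupport φ ∧
    ∀ N : ℝ, 0 < N → ∃ C : ℝ, 0 < C ∧
      ∀ ξ, ‖FT φ ξ‖ ≤ C * Real.exp (-N * ‖ξ‖ ^ (1 / s))

/-- An `s`-admissible weight: positive, measurable, and moderate with respect to an even
submultiplicative weight of sub-exponential growth of order `1/s`. -/
def IsSAdmissible (s : ℝ) (ω : EuclideanSpace ℝ (Fin d) → ℝ) : Prop :=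
  Measurable ω ∧ (∀ x, 0 < ω x) ∧
    ∃ v : EuclideanSpace ℝ (Fin d) → ℝ, Measurable v ∧ (∀ x, 0 < v x) ∧
      (∀ x, v (-x) = v x) ∧ (∀ x y, v (x + y) ≤ v x * v y) ∧
      ∃ C₀ k₀ C₁ : ℝ, 0 < C₀ ∧ 0 < k₀ ∧ 0 < C₁ ∧
        (∀ ξ, v ξ ≤ C₀ * Real.exp (k₀ * ‖ξ‖ ^ (1 / s))) ∧
        ∀ x y, ω (x + y) ≤ C₁ * v x * ω y

/-- The Fourier–Lebesgue seminorm `( ∫_Γ (|f̂| ω)^q )^{1/q}` (ess-sup when `q = ∞`). -/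
def FLSemi (ω : EuclideanSpace ℝ (Fin d) → ℝ) (q : ℝ≥0∞)
    (f : EuclideanSpace ℝ (Fin d) → ℂ) (Γ : Set (EuclideanSpace ℝ (Fin d))) : ℝ≥0∞ :=
  eLpNorm (fun ξ => ‖FT f ξ‖ * ω ξ) q (volume.restrict Γ)

/-- The Fourier–Lebesgue wave-front set `WF_{FL^q_ω} f`. -/
def WF_FL (s : ℝ) (q : ℝ≥0∞) (ω : EuclideanSpace ℝ (Fin d) → ℝ)
    (f : EuclideanSpace ℝ (Fin d) → ℂ) :
    Set (EuclideanSpace ℝ (Fin d) × EuclideanSpace ℝ (Fin d)) :=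
  {z | z.2 ≠ 0 ∧ ∀ φ : EuclideanSpace ℝ (Fin d) → ℂ, IsSCutoff s φ → φ z.1 ≠ 0 →
    ∀ Γ : Set (EuclideanSpace ℝ (Fin d)), IsOpen Γ → IsCone Γ → z.2 ∈ Γ →
      FLSemi ω q (fun x => φ x * f x) Γ = ∞}

/-- The `s`-wave-front set `WF_s f`. -/
def WFs (s : ℝ) (f : EuclideanSpace ℝ (Fin d) → ℂ) :
    Set (EuclideanSpace ℝ (Fin d) × EuclideanSpace ℝ (Fin d)) :=
  {z | z.2 ≠ 0 ∧ ¬ ∃ φ : EuclideanSpace ℝ (Fin d) → ℂ, IsSCutoff s φ ∧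
    (∃ U : Set (EuclideanSpace ℝ (Fin d)), IsOpen U ∧ z.1 ∈ U ∧ ∀ x ∈ U, φ x = 1) ∧
    ∃ Γ : Set (EuclideanSpace ℝ (Fin d)), IsOpen Γ ∧ IsCone Γ ∧ z.2 ∈ Γ ∧
      ∃ C k : ℝ, 0 < C ∧ 0 < k ∧
        ∀ ξ ∈ Γ, ‖FT (fun x => φ x * f x) ξ‖ ≤ C * Real.exp (-k * ‖ξ‖ ^ (1 / s))}

/-- The mixed modulation-space seminorm
`( ∫_Γ ( ∫ |V_g F(x,ξ)|^p dx )^{q/p} ω(ξ)^q dξ )^{1/q}` with the usual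
ess-sup interpretations for `p = ∞` or `q = ∞`. -/
def ModSemi (g F : EuclideanSpace ℝ (Fin d) → ℂ) (ω : EuclideanSpace ℝ (Fin d) → ℝ)
    (p q : ℝ≥0∞) (Γ : Set (EuclideanSpace ℝ (Fin d))) : ℝ≥0∞ :=
  if q = ∞ then
    essSup (fun ξ => eLpNorm (fun x => STFT g F x ξ) p volume * ENNReal.ofReal (ω ξ))
      (volume.restrict Γ)
  else
    (∫⁻ ξ in Γ, (eLpNorm (fun x => STFT g F x ξ) p volume * ENNReal.ofReal (ω ξ)) ^ q.toReal) ^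
      (1 / q.toReal)

/-- The modulation wave-front set `WF_{M^{p,q}_ω} f`, with window `g`. -/
def WF_M (s : ℝ) (p q : ℝ≥0∞) (ω : EuclideanSpace ℝ (Fin d) → ℝ)
    (g f : EuclideanSpace ℝ (Fin d) → ℂ) :
    Set (EuclideanSpace ℝ (Fin d) × EuclideanSpace ℝ (Fin d)) :=
  {z | z.2 ≠ 0 ∧ ∀ φ : EuclideanSpace ℝ (Fin d) → ℂ, IsSCutoff s φ → φ z.1 ≠ 0 →
    ∀ Γ : Set (EuclideanSpace ℝ (Fin d)), IsOpen Γ → IsCone Γ → z.2 ∈ Γ →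
      ModSemi g (fun x => φ x * f x) ω p q Γ = ∞}

/-- Reinterpret a plain vector as a point of Euclidean space. -/
def toE (x : Fin d → ℝ) : EuclideanSpace ℝ (Fin d) :=
  (EuclideanSpace.equiv (Fin d) ℝ).symm x

/-- The point `A k` of the lattice `A(ℤ^d)`. -/
def latPt (A : Matrix (Fin d) (Fin d) ℝ) (k : Fin d → ℤ) : EuclideanSpace ℝ (Fin d) :=
  toE (A.mulVec fun i => (k i : ℝ))

/-- The point `c (Aᵀ)⁻¹ k` of the dual lattice `c (Aᵀ)⁻¹(ℤ^d)`. -/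
def dualLatPt (A : Matrix (Fin d) (Fin d) ℝ) (c : ℝ) (k : Fin d → ℤ) :
    EuclideanSpace ℝ (Fin d) :=
  toE (c • (A.transpose⁻¹.mulVec fun i => (k i : ℝ)))

/-- The parallelepiped `x₁ + A([0,1]^d)`. -/
def lattPara (A : Matrix (Fin d) (Fin d) ℝ) (x₁ : EuclideanSpace ℝ (Fin d)) :
    Set (EuclideanSpace ℝ (Fin d)) :=
  (fun t : Fin d → ℝ => x₁ + toE (A.mulVec t)) '' (Set.univ.pi fun _ => Set.Icc 0 1)

/-- The adjoint short-time Fourier transform `V*_φ F`. -/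
def VStar (φ : EuclideanSpace ℝ (Fin d) → ℂ)
    (F : EuclideanSpace ℝ (Fin d) × EuclideanSpace ℝ (Fin d) → ℂ)
    (t : EuclideanSpace ℝ (Fin d)) : ℂ :=
  ((2 * Real.pi) ^ (-(d : ℝ) / 2) : ℝ) *
    ∫ z : EuclideanSpace ℝ (Fin d) × EuclideanSpace ℝ (Fin d),
      F z * Complex.exp ((⟪z.2, t⟫ : ℝ) * Complex.I) * φ (t - z.1)

/-!
Since `V*_φ F` is a superposition `c ∫ F(z) π(z)φ dz` of time-frequency shifts of `φ`, Fubini gives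
`V_{φ₁} V*_φ F = c ∫ F(z) V_{φ₁}(π(z)φ) dz`. By covariance, `V_{φ₁}(π(z)φ)` is, up to a unimodular
factor, the translate of `V_{φ₁}φ` by `z`, so `|V_{φ₁} V*_φ F|` is dominated by the convolution
`c (|V_{φ₁}φ| * |F|)` on phase space. Moderateness `ω(z + w) ≤ C₁ v(z) ω(w)` moves the weights
inside the convolution, and Young's inequality `‖f * g‖_p ≤ ‖f‖₁ ‖g‖_p` concludes.
-/

section Lebesgue

variable {α : Type*} [MeasurableSpace α] {μ : Measure α} {f g : α → ℝ≥0∞}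

theorem rpow_lintegral_mul_le (hf : AEMeasurable f μ) (hg : AEMeasurable g μ) {r : ℝ}
    (hr : 1 ≤ r) :
    (∫⁻ x, f x * g x ∂μ) ^ r ≤ (∫⁻ x, f x ∂μ) ^ (r - 1) * ∫⁻ x, f x * g x ^ r ∂μ := by
  have hr₀ : 0 < r := zero_lt_one.trans_le hr
  have hr₁ : 0 ≤ 1 - 1 / r := sub_nonneg.2 ((div_le_one hr₀).2 hr)
  have factor (x : α) : f x ^ (1 - 1 / r) * (f x * g x ^ r) ^ (1 / r) = f x * g x := by
    rw [ENNReal.mul_rpow_of_nonneg _ _ (by positivity), ← ENNReal.rpow_mul,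
      mul_one_div_cancel hr₀.ne', ENNReal.rpow_one, ← mul_assoc,
      ← ENNReal.rpow_add_of_nonneg _ _ hr₁ (by positivity), sub_add_cancel, ENNReal.rpow_one]
  have holder := ENNReal.lintegral_mul_norm_pow_le hf (hf.mul (hg.pow_const r)) hr₁
    (by positivity : 0 ≤ 1 / r) (sub_add_cancel 1 _)
  simp only [Pi.mul_apply, factor] at holder
  calc (∫⁻ x, f x * g x ∂μ) ^ r
      ≤ ((∫⁻ x, f x ∂μ) ^ (1 - 1 / r) * (∫⁻ x, f x * g x ^ r ∂μ) ^ (1 / r)) ^ r := by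
        gcongr
    _ = (∫⁻ x, f x ∂μ) ^ (r - 1) * ∫⁻ x, f x * g x ^ r ∂μ := by
        rw [ENNReal.mul_rpow_of_nonneg _ _ hr₀.le, ← ENNReal.rpow_mul, ← ENNReal.rpow_mul,
          one_div_mul_cancel hr₀.ne', ENNReal.rpow_one, sub_mul, one_mul,
          one_div_mul_cancel hr₀.ne']

theorem eLpNorm_norm_mul {X : Type*} [NormedAddCommGroup X] (h : α → X) (u : α → ℝ) (p : ℝ≥0∞)
    (μ : Measure α) :
    eLpNorm (fun x => ‖h x‖ * u x) p μ = eLpNorm (fun x => ‖h x‖ₑ * ‖u x‖ₑ) p μ :=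
  eLpNorm_congr_enorm_ae (.of_forall fun x => by
    rw [enorm_mul, enorm_norm, enorm_eq_self])

end Lebesgue

section LConvolution

variable {G : Type*} [MeasurableSpace G] [AddGroup G] {μ : Measure G} {f g v ω : G → ℝ≥0∞}

theorem lconvolution_mul_le_of_moderate {C : ℝ≥0} (hω : ∀ x y, ω (x + y) ≤ C * v x * ω y) (x : G) :
    (f ⋆ₗ[μ] g) x * ω x ≤ C * ((fun y => f y * v y) ⋆ₗ[μ] fun y => g y * ω y) x := by
  simp only [lconvolution_def]
  rw [← lintegral_const_mul' _ _ ENNReal.coe_ne_top]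
  refine (lintegral_mul_const_le _ _).trans (lintegral_mono fun y => ?_)
  calc f y * g (-y + x) * ω x
      = f y * g (-y + x) * ω (y + (-y + x)) := by rw [add_neg_cancel_left]
    _ ≤ f y * g (-y + x) * (C * v y * ω (-y + x)) := by
        gcongr
        exact hω y (-y + x)
    _ = C * (f y * v y * (g (-y + x) * ω (-y + x))) := by ring

variable [MeasurableAdd₂ G] [MeasurableNeg G] [SFinite μ] [μ.IsAddLeftInvariant]

theorem quasiMeasurePreserving_neg_add (x : G) :
    Measure.QuasiMeasurePreserving (fun y => -y + x) μ μ :=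
  (quasiMeasurePreserving_add_right μ x).comp (quasiMeasurePreserving_neg μ)

theorem lintegral_lconvolution (hf : AEMeasurable f μ) (hg : AEMeasurable g μ) :
    ∫⁻ x, (f ⋆ₗ[μ] g) x ∂μ = (∫⁻ x, f x ∂μ) * ∫⁻ x, g x ∂μ := by
  simp only [lconvolution_def]
  rw [lintegral_lintegral_swap (by fun_prop), ← lintegral_mul_const'' _ hf]
  refine lintegral_congr fun y => ?_
  have hg_shift : AEMeasurable (fun x => g (-y + x)) μ :=
    hg.comp_quasiMeasurePreserving (measurePreserving_add_left μ (-y)).quasiMeasurePreserving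
  rw [lintegral_const_mul'' _ hg_shift, lintegral_add_left_eq_self g (-y)]

theorem lconvolution_rpow_le (hf : AEMeasurable f μ) (hg : AEMeasurable g μ) {r : ℝ}
    (hr : 1 ≤ r) (x : G) :
    (f ⋆ₗ[μ] g) x ^ r ≤ (∫⁻ y, f y ∂μ) ^ (r - 1) * (f ⋆ₗ[μ] fun y => g y ^ r) x :=
  rpow_lintegral_mul_le hf
    (hg.comp_quasiMeasurePreserving (quasiMeasurePreserving_neg_add x)) hr

theorem lconvolution_le_lintegral_mul_essSup (hf : AEMeasurable f μ) (x : G) :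
    (f ⋆ₗ[μ] g) x ≤ (∫⁻ y, f y ∂μ) * essSup g μ := by
  rw [lconvolution_def, ← lintegral_mul_const'' _ hf]
  refine lintegral_mono_ae ?_
  filter_upwards [(quasiMeasurePreserving_neg_add x).ae (ENNReal.ae_le_essSup g)] with y hy
  gcongr

theorem lintegral_lconvolution_rpow_le (hf : AEMeasurable f μ) (hg : AEMeasurable g μ) {r : ℝ}
    (hr : 1 ≤ r) :
    ∫⁻ x, (f ⋆ₗ[μ] g) x ^ r ∂μ ≤ (∫⁻ x, f x ∂μ) ^ r * ∫⁻ x, g x ^ r ∂μ :=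
  calc ∫⁻ x, (f ⋆ₗ[μ] g) x ^ r ∂μ
      ≤ ∫⁻ x, (∫⁻ y, f y ∂μ) ^ (r - 1) * (f ⋆ₗ[μ] fun y => g y ^ r) x ∂μ :=
        lintegral_mono fun x => lconvolution_rpow_le hf hg hr x
    _ = (∫⁻ x, f x ∂μ) ^ (r - 1) * ((∫⁻ x, f x ∂μ) * ∫⁻ x, g x ^ r ∂μ) := by
        rw [lintegral_const_mul'' _ (aemeasurable_lconvolution hf (hg.pow_const r)),
          lintegral_lconvolution hf (hg.pow_const r)]
    _ = (∫⁻ x, f x ∂μ) ^ r * ∫⁻ x, g x ^ r ∂μ := by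
        nth_rw 2 [← ENNReal.rpow_one (∫⁻ x, f x ∂μ)]
        rw [← mul_assoc, ← ENNReal.rpow_add_of_nonneg _ _ (sub_nonneg.2 hr) zero_le_one,
          sub_add_cancel]

theorem eLpNorm_lconvolution_le (hf : AEMeasurable f μ) (hg : AEMeasurable g μ) {p : ℝ≥0∞}
    (hp : 1 ≤ p) :
    eLpNorm (f ⋆ₗ[μ] g) p μ ≤ (∫⁻ x, f x ∂μ) * eLpNorm g p μ := by
  rcases eq_or_ne p ∞ with rfl | hp_top
  · exact eLpNormEssSup_le_of_ae_enorm_bound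
      (.of_forall (lconvolution_le_lintegral_mul_essSup hf))
  have hp₀ : p ≠ 0 := (zero_lt_one.trans_le hp).ne'
  have hr : 1 ≤ p.toReal := ENNReal.toReal_one ▸ ENNReal.toReal_mono hp_top hp
  have hr₀ : 0 < p.toReal := zero_lt_one.trans_le hr
  simp only [eLpNorm_eq_lintegral_rpow_enorm_toReal hp₀ hp_top, enorm_eq_self]
  calc (∫⁻ x, (f ⋆ₗ[μ] g) x ^ p.toReal ∂μ) ^ (1 / p.toReal)
      ≤ ((∫⁻ x, f x ∂μ) ^ p.toReal * ∫⁻ x, g x ^ p.toReal ∂μ) ^ (1 / p.toReal) := by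
        gcongr
        exact lintegral_lconvolution_rpow_le hf hg hr
    _ = (∫⁻ x, f x ∂μ) * (∫⁻ x, g x ^ p.toReal ∂μ) ^ (1 / p.toReal) := by
        rw [ENNReal.mul_rpow_of_nonneg _ _ (by positivity), ← ENNReal.rpow_mul,
          mul_one_div_cancel hr₀.ne', ENNReal.rpow_one]

theorem eLpNorm_lconvolution_mul_le_of_moderate {C : ℝ≥0}
    (hω : ∀ x y, ω (x + y) ≤ C * v x * ω y) (hfv : AEMeasurable (fun x => f x * v x) μ)
    (hgω : AEMeasurable (fun x => g x * ω x) μ) {p : ℝ≥0∞} (hp : 1 ≤ p) :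
    eLpNorm (fun x => (f ⋆ₗ[μ] g) x * ω x) p μ ≤
      C * ((∫⁻ x, f x * v x ∂μ) * eLpNorm (fun x => g x * ω x) p μ) :=
  (eLpNorm_le_nnreal_smul_eLpNorm_of_ae_le_mul'
    (.of_forall fun x => lconvolution_mul_le_of_moderate hω x) p).trans
    (mul_le_mul_right (eLpNorm_lconvolution_le hfv hgω hp) _)

end LConvolution

section PhaseSpace

variable {E : Type*} [NormedAddCommGroup E] [InnerProductSpace ℝ E] [FiniteDimensional ℝ E]
  [MeasurableSpace E] [BorelSpace E]

-- Instance search does not see through the definitional equality `volume = volume.prod volume`.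
instance isAddHaarMeasure_volume_prod_self : (volume : Measure (E × E)).IsAddHaarMeasure :=
  Measure.prod.instIsAddHaarMeasure _ _

instance isNegInvariant_volume_prod_self : (volume : Measure (E × E)).IsNegInvariant :=
  Measure.IsAddHaarMeasure.isNegInvariant_of_regular _

end PhaseSpace

section TimeFreqShift

variable {E : Type*} [NormedAddCommGroup E] [InnerProductSpace ℝ E]

/-- The time-frequency shift `M_ξ T_x φ` of `φ` by the phase-space point `z = (x, ξ)`: translation
by `x`, followed by modulation with frequency `ξ`. -/
def timeFreqShift (z : E × E) (φ : E → ℂ) (y : E) : ℂ :=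
  Complex.exp ((⟪z.2, y⟫ : ℝ) * Complex.I) * φ (y - z.1)

@[simp]
theorem norm_timeFreqShift (z : E × E) (φ : E → ℂ) (y : E) :
    ‖timeFreqShift z φ y‖ = ‖φ (y - z.1)‖ := by
  rw [timeFreqShift, norm_mul, Complex.norm_exp_ofReal_mul_I, one_mul]

theorem conj_timeFreqShift (z : E × E) (φ : E → ℂ) (y : E) :
    (starRingEnd ℂ) (timeFreqShift z φ y) =
      (starRingEnd ℂ) (φ (y - z.1)) * Complex.exp (-(⟪z.2, y⟫ : ℝ) * Complex.I) := by
  rw [timeFreqShift, map_mul, ← Complex.exp_conj, map_mul, Complex.conj_ofReal, Complex.conj_I,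
    mul_neg, ← neg_mul, mul_comm]

variable [MeasurableSpace E] [BorelSpace E] {μ : Measure E} [μ.IsAddRightInvariant]
  {φ ψ : E → ℂ} {q q' : ℝ≥0∞}

theorem aestronglyMeasurable_timeFreqShift (hφ : AEStronglyMeasurable φ μ) (z : E × E) :
    AEStronglyMeasurable (timeFreqShift z φ) μ :=
  have hmod : Continuous fun y => Complex.exp ((⟪z.2, y⟫ : ℝ) * Complex.I) := by fun_prop
  hmod.aestronglyMeasurable.mul
    (hφ.comp_measurePreserving (measurePreserving_sub_right μ z.1))

theorem eLpNorm_timeFreqShift (hφ : AEStronglyMeasurable φ μ) (z : E × E) :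
    eLpNorm (timeFreqShift z φ) q μ = eLpNorm φ q μ :=
  calc eLpNorm (timeFreqShift z φ) q μ
      = eLpNorm (φ ∘ fun y => y - z.1) q μ :=
        eLpNorm_congr_norm_ae (.of_forall (norm_timeFreqShift z φ))
    _ = eLpNorm φ q μ :=
        eLpNorm_comp_measurePreserving hφ (measurePreserving_sub_right μ z.1)

theorem memLp_timeFreqShift (hφ : MemLp φ q μ) (z : E × E) : MemLp (timeFreqShift z φ) q μ :=
  ⟨aestronglyMeasurable_timeFreqShift hφ.1 z, (eLpNorm_timeFreqShift hφ.1 z).trans_lt hφ.2⟩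

theorem lintegral_enorm_timeFreqShift_mul_le [q.HolderConjugate q']
    (hφ : AEStronglyMeasurable φ μ) (hψ : AEStronglyMeasurable ψ μ) (z : E × E) :
    ∫⁻ y, ‖timeFreqShift z φ y * ψ y‖ₑ ∂μ ≤ eLpNorm φ q μ * eLpNorm ψ q' μ := by
  have holder := eLpNorm_smul_le_mul_eLpNorm (p := q) (q := q') (r := 1) hψ
    (aestronglyMeasurable_timeFreqShift hφ z)
  rwa [eLpNorm_timeFreqShift hφ, eLpNorm_one_eq_lintegral_enorm] at holder

variable [SecondCountableTopology E] [SFinite μ] {ρ : Measure (E × E)}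

theorem aestronglyMeasurable_timeFreqShift_prod (hφ : AEStronglyMeasurable φ μ) :
    AEStronglyMeasurable (fun a : (E × E) × E => timeFreqShift a.1 φ a.2) (ρ.prod μ) := by
  have hsub : Measure.QuasiMeasurePreserving (fun a : (E × E) × E => a.2 - a.1.1)
      (ρ.prod μ) μ :=
    QuasiMeasurePreserving.prod_of_right (by fun_prop)
      (.of_forall fun z => (measurePreserving_sub_right μ z.1).quasiMeasurePreserving)
  have hmod : Continuous fun a : (E × E) × E =>
      Complex.exp ((⟪a.1.2, a.2⟫ : ℝ) * Complex.I) := by fun_prop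
  exact hmod.aestronglyMeasurable.mul (hφ.comp_quasiMeasurePreserving hsub)

theorem integrable_mul_timeFreqShift_mul [q.HolderConjugate q']
    {F : E × E → ℂ} (hF : Integrable F ρ) (hφ : MemLp φ q μ) (hψ : MemLp ψ q' μ) :
    Integrable (fun a : (E × E) × E => F a.1 * (timeFreqShift a.1 φ a.2 * ψ a.2))
      (ρ.prod μ) := by
  have hmeas : AEStronglyMeasurable
      (fun a : (E × E) × E => F a.1 * (timeFreqShift a.1 φ a.2 * ψ a.2)) (ρ.prod μ) :=
    hF.1.comp_fst.mul ((aestronglyMeasurable_timeFreqShift_prod hφ.1).mul hψ.1.comp_snd)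
  refine ⟨hmeas, ?_⟩
  calc ∫⁻ a, ‖F a.1 * (timeFreqShift a.1 φ a.2 * ψ a.2)‖ₑ ∂ρ.prod μ
      = ∫⁻ z, ‖F z‖ₑ * ∫⁻ y, ‖timeFreqShift z φ y * ψ y‖ₑ ∂μ ∂ρ := by
        rw [lintegral_prod _ hmeas.enorm]
        refine lintegral_congr fun z => ?_
        simp only [enorm_mul (F z)]
        rw [lintegral_const_mul' _ _ enorm_ne_top]
    _ ≤ ∫⁻ z, ‖F z‖ₑ * (eLpNorm φ q μ * eLpNorm ψ q' μ) ∂ρ := by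
        gcongr with z
        exact lintegral_enorm_timeFreqShift_mul_le hφ.1 hψ.1 z
    _ = (∫⁻ z, ‖F z‖ₑ ∂ρ) * (eLpNorm φ q μ * eLpNorm ψ q' μ) :=
        lintegral_mul_const'' _ hF.1.enorm
    _ < ∞ := ENNReal.mul_lt_top hF.2 (ENNReal.mul_lt_top hφ.2 hψ.2)

end TimeFreqShift

section ShortTimeFourierTransform

variable {φ φ₁ f : EuclideanSpace ℝ (Fin d) → ℂ}
  {F : EuclideanSpace ℝ (Fin d) × EuclideanSpace ℝ (Fin d) → ℂ}

theorem STFT_eq_integral_timeFreqShift (φ f : EuclideanSpace ℝ (Fin d) → ℂ)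
    (x ξ : EuclideanSpace ℝ (Fin d)) :
    STFT φ f x ξ = ((2 * Real.pi) ^ (-(d : ℝ) / 2) : ℝ) *
      ∫ y, f y * (starRingEnd ℂ) (timeFreqShift (x, ξ) φ y) := by
  simp only [STFT, conj_timeFreqShift, mul_assoc]

theorem VStar_eq_integral_timeFreqShift (φ : EuclideanSpace ℝ (Fin d) → ℂ)
    (F : EuclideanSpace ℝ (Fin d) × EuclideanSpace ℝ (Fin d) → ℂ) (t : EuclideanSpace ℝ (Fin d)) :
    VStar φ F t = ((2 * Real.pi) ^ (-(d : ℝ) / 2) : ℝ) * ∫ z, F z * timeFreqShift z φ t := by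
  simp only [VStar, timeFreqShift, mul_assoc]

theorem STFT_timeFreqShift (φ₁ φ : EuclideanSpace ℝ (Fin d) → ℂ)
    (z : EuclideanSpace ℝ (Fin d) × EuclideanSpace ℝ (Fin d)) (x ξ : EuclideanSpace ℝ (Fin d)) :
    STFT φ₁ (timeFreqShift z φ) x ξ =
      Complex.exp ((⟪z.2 - ξ, z.1⟫ : ℝ) * Complex.I) * STFT φ₁ φ (x - z.1) (ξ - z.2) := by
  have phase (y : EuclideanSpace ℝ (Fin d)) :
      Complex.exp ((⟪z.2, y + z.1⟫ : ℝ) * Complex.I) *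
          Complex.exp (-(⟪ξ, y + z.1⟫ : ℝ) * Complex.I) =
        Complex.exp ((⟪z.2 - ξ, z.1⟫ : ℝ) * Complex.I) *
          Complex.exp (-(⟪ξ - z.2, y⟫ : ℝ) * Complex.I) := by
    rw [← Complex.exp_add, ← Complex.exp_add]
    congr 1
    simp only [inner_add_right, inner_sub_left]
    push_cast
    ring
  rw [STFT, STFT, mul_left_comm]
  congr 1
  rw [← integral_const_mul (Complex.exp _), ← integral_add_right_eq_self _ z.1]
  refine integral_congr_ae (.of_forall fun y => ?_)
  beta_reduce
  rw [timeFreqShift, add_sub_cancel_right, ← sub_sub_eq_add_sub]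
  linear_combination φ y * (starRingEnd ℂ) (φ₁ (y - (x - z.1))) * phase y

theorem enorm_STFT_timeFreqShift (φ₁ φ : EuclideanSpace ℝ (Fin d) → ℂ)
    (z w : EuclideanSpace ℝ (Fin d) × EuclideanSpace ℝ (Fin d)) :
    ‖STFT φ₁ (timeFreqShift z φ) w.1 w.2‖ₑ = ‖STFT φ₁ φ (-z + w).1 (-z + w).2‖ₑ := by
  rw [STFT_timeFreqShift, enorm_mul, enorm_eq_nnnorm, Complex.nnnorm_exp_ofReal_mul_I,
    ENNReal.coe_one, one_mul, neg_add_eq_sub, Prod.fst_sub, Prod.snd_sub]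

theorem aestronglyMeasurable_STFT (hφ : AEStronglyMeasurable φ volume)
    (hf : AEStronglyMeasurable f volume) :
    AEStronglyMeasurable (fun z : EuclideanSpace ℝ (Fin d) × EuclideanSpace ℝ (Fin d) =>
      STFT φ f z.1 z.2) volume := by
  simp only [STFT_eq_integral_timeFreqShift]
  exact (hf.comp_snd.mul (Complex.continuous_conj.comp_aestronglyMeasurable
    (aestronglyMeasurable_timeFreqShift_prod hφ))).integral_prod_right'.const_mul _

variable {q q' : ℝ≥0∞} [q.HolderConjugate q']

theorem STFT_VStar (hφ : MemLp φ q) (hφ₁ : MemLp φ₁ q') (hF : Integrable F)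
    (x ξ : EuclideanSpace ℝ (Fin d)) :
    STFT φ₁ (VStar φ F) x ξ = ((2 * Real.pi) ^ (-(d : ℝ) / 2) : ℝ) *
      ∫ z, F z * STFT φ₁ (timeFreqShift z φ) x ξ := by
  set c : ℂ := (((2 * Real.pi) ^ (-(d : ℝ) / 2) : ℝ) : ℂ) with hc
  let ψ : EuclideanSpace ℝ (Fin d) → ℂ := star (timeFreqShift (x, ξ) φ₁)
  have hψ : MemLp ψ q' := (memLp_timeFreqShift hφ₁ (x, ξ)).star
  have fubini : ∫ y, ∫ z, F z * (timeFreqShift z φ y * ψ y) =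
      ∫ z, ∫ y, F z * (timeFreqShift z φ y * ψ y) :=
    (integral_integral_swap (integrable_mul_timeFreqShift_mul hF hφ hψ)).symm
  calc STFT φ₁ (VStar φ F) x ξ
      = c * ∫ y, c * ∫ z, F z * (timeFreqShift z φ y * ψ y) := by
        simp only [STFT_eq_integral_timeFreqShift, VStar_eq_integral_timeFreqShift, ← hc,
          ← mul_assoc (F _), integral_mul_const, mul_assoc c]
        rfl
    _ = c * ∫ z, F z * (c * ∫ y, timeFreqShift z φ y * ψ y) := by
        rw [integral_const_mul, fubini]
        simp only [integral_const_mul, mul_left_comm _ c]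
    _ = c * ∫ z, F z * STFT φ₁ (timeFreqShift z φ) x ξ := by
        simp only [STFT_eq_integral_timeFreqShift, ← hc]
        rfl

theorem enorm_STFT_VStar_le (hφ : MemLp φ q) (hφ₁ : MemLp φ₁ q') (hF : Integrable F)
    (w : EuclideanSpace ℝ (Fin d) × EuclideanSpace ℝ (Fin d)) :
    ‖STFT φ₁ (VStar φ F) w.1 w.2‖ₑ ≤ ENNReal.ofReal ((2 * Real.pi) ^ (-(d : ℝ) / 2)) *
      ((fun z => ‖F z‖ₑ) ⋆ₗ fun z => ‖STFT φ₁ φ z.1 z.2‖ₑ) w := by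
  have hc : ‖(((2 * Real.pi) ^ (-(d : ℝ) / 2) : ℝ) : ℂ)‖ₑ =
      ENNReal.ofReal ((2 * Real.pi) ^ (-(d : ℝ) / 2)) := by
    rw [← ofReal_norm, Complex.norm_of_nonneg (by positivity)]
  rw [STFT_VStar hφ hφ₁ hF, enorm_mul, hc, lconvolution_def]
  gcongr
  refine (enorm_integral_le_lintegral_enorm _).trans_eq (lintegral_congr fun z => ?_)
  rw [enorm_mul, enorm_STFT_timeFreqShift]

end ShortTimeFourierTransform

theorem stmt18_general {p q q' : ℝ≥0∞} (hp : 1 ≤ p) [q.HolderConjugate q']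
    {ω v : EuclideanSpace ℝ (Fin d) × EuclideanSpace ℝ (Fin d) → ℝ}
    (hωm : AEMeasurable ω) (hω₀ : ∀ z, 0 ≤ ω z) (hvm : AEMeasurable v) {C₁ : ℝ} (hC₁ : 0 ≤ C₁)
    (hmod : ∀ z w, ω (z + w) ≤ C₁ * v z * ω w)
    {φ φ₁ : EuclideanSpace ℝ (Fin d) → ℂ} (hφ : MemLp φ q) (hφ₁ : MemLp φ₁ q')
    {F : EuclideanSpace ℝ (Fin d) × EuclideanSpace ℝ (Fin d) → ℂ} (hF : Integrable F) :
    eLpNorm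
        (fun z : EuclideanSpace ℝ (Fin d) × EuclideanSpace ℝ (Fin d) =>
          ‖STFT φ₁ (VStar φ F) z.1 z.2‖ * ω z) p volume ≤
      ENNReal.ofReal ((2 * Real.pi) ^ (-(d : ℝ) / 2)) * ENNReal.ofReal C₁ *
        eLpNorm
          (fun z : EuclideanSpace ℝ (Fin d) × EuclideanSpace ℝ (Fin d) =>
            ‖STFT φ₁ φ z.1 z.2‖ * v z) 1 volume *
        eLpNorm (fun z => ‖F z‖ * ω z) p volume := by
  have hmod_enorm (z w) : ‖ω (z + w)‖ₑ ≤ C₁.toNNReal * ‖v z‖ₑ * ‖ω w‖ₑ := by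
    rw [← ENNReal.ofReal, ← Real.enorm_of_nonneg hC₁, ← enorm_mul, ← enorm_mul,
      Real.enorm_of_nonneg (hω₀ _)]
    exact (ENNReal.ofReal_le_ofReal (hmod z w)).trans (Real.ofReal_le_enorm _)
  have hpoint (w) : ‖‖STFT φ₁ (VStar φ F) w.1 w.2‖ * ω w‖ₑ ≤
      ((2 * Real.pi) ^ (-(d : ℝ) / 2)).toNNReal *
        ‖((fun z => ‖STFT φ₁ φ z.1 z.2‖ₑ) ⋆ₗ fun z => ‖F z‖ₑ) w * ‖ω w‖ₑ‖ₑ := by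
    rw [enorm_mul, enorm_norm, enorm_eq_self, ← mul_assoc, lconvolution_comm]
    gcongr
    exact enorm_STFT_VStar_le hφ hφ₁ hF w
  refine (eLpNorm_le_nnreal_smul_eLpNorm_of_ae_le_mul' (.of_forall hpoint) p).trans ?_
  rw [eLpNorm_norm_mul F, eLpNorm_norm_mul, eLpNorm_one_eq_lintegral_enorm, mul_assoc, mul_assoc]
  exact mul_le_mul_right (eLpNorm_lconvolution_mul_le_of_moderate hmod_enorm
    ((aestronglyMeasurable_STFT hφ₁.1 hφ.1).enorm.mul hvm.enorm) (hF.1.enorm.mul hωm.enorm) hp) _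

theorem stmt18 {d : ℕ} (s : ℝ) (hs : 1 < s) (p : ℝ≥0∞) (hp : 1 ≤ p)
    (ω v : EuclideanSpace ℝ (Fin d) × EuclideanSpace ℝ (Fin d) → ℝ)
    (hωm : Measurable ω) (hω0 : ∀ z, 0 < ω z)
    (hvm : Measurable v) (hv0 : ∀ z, 0 < v z) (hveven : ∀ z, v (-z) = v z)
    (hvsub : ∀ z w, v (z + w) ≤ v z * v w)
    (C₀ k₀ C₁ : ℝ) (hC₀ : 0 < C₀) (hk₀ : 0 < k₀) (hC₁ : 0 < C₁)
    (hv : ∀ z, v z ≤ C₀ * Real.exp (k₀ * ‖z‖ ^ (1 / s)))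
    (hmod : ∀ z w, ω (z + w) ≤ C₁ * v z * ω w)
    (φ φ₁ : SchwartzMap (EuclideanSpace ℝ (Fin d)) ℂ)
    (F : EuclideanSpace ℝ (Fin d) × EuclideanSpace ℝ (Fin d) → ℂ) (hF : Integrable F)
    (hFω : eLpNorm (fun z => ‖F z‖ * ω z) p volume < ∞) :
    eLpNorm
        (fun z : EuclideanSpace ℝ (Fin d) × EuclideanSpace ℝ (Fin d) =>
          ‖STFT (⇑φ₁) (VStar (⇑φ) F) z.1 z.2‖ * ω z) p volume ≤
      ENNReal.ofReal ((2 * Real.pi) ^ (-(d : ℝ) / 2)) * ENNReal.ofReal C₁ *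
        eLpNorm
          (fun z : EuclideanSpace ℝ (Fin d) × EuclideanSpace ℝ (Fin d) =>
            ‖STFT (⇑φ₁) (⇑φ) z.1 z.2‖ * v z) 1 volume *
        eLpNorm (fun z => ‖F z‖ * ω z) p volume :=
  stmt18_general hp hωm.aemeasurable (fun z => (hω0 z).le) hvm.aemeasurable hC₁.le hmod
    (φ.memLp 2) (φ₁.memLp 2) hF

end Paper
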